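/- Let Φ be of type B_n, C_n, or D_n and let λ be an integral Φ_I-regular weight with Φ_{λ̄} = Φ_J. If λ is separable relative to the pair (S, S̄), then every μ ∈ ^IW^Jλ̄ is separable relative to (S, S̄). -/

import Mathlib

namespace JantzenBlocks

open scoped Classical

/-- The three classical types `B`, `C`, `D`. -/
inductive CType : Type
  | B | C | D
deriving DecidableEq

/-- The weight space `ℝ^n`. -/
abbrev V (n : ℕ) := Fin n → ℝ

noncomputable section

/-- The standard inner product on `ℝ^n`. -/
def inn {n : ℕ} (x y : V n) : ℝ := ∑ i, x i * y i

/-- The standard basis vector `e i`. -/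
def ee {n : ℕ} (i : Fin n) : V n := Pi.single i 1

/-- The reflection `s_v` in the vector `v`. -/
def sRefl {n : ℕ} (v x : V n) : V n := x - (2 * inn x v / inn v v) • v

/-- The roots `±e_i ± e_j` (`i ≠ j`), i.e. the root system of type `D_n`. -/
def DRoots (n : ℕ) : Set (V n) :=
  {v | ∃ i j : Fin n, i ≠ j ∧ (v = ee i + ee j ∨ v = ee i - ee j ∨ v = -ee i - ee j)}

/-- The ambient root system `Φ` of type `B_n`, `C_n` or `D_n`. -/
def Phi (n : ℕ) : CType → Set (V n)
  | CType.B => DRoots n ∪ {v | ∃ i : Fin n, v = ee i ∨ v = -ee i}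
  | CType.C => DRoots n ∪ {v | ∃ i : Fin n, v = (2:ℝ) • ee i ∨ v = -((2:ℝ) • ee i)}
  | CType.D => DRoots n

/-- The standard positive system `Φ⁺`: roots whose first nonzero coordinate is positive. -/
def PhiPos (n : ℕ) (ct : CType) : Set (V n) :=
  {v | v ∈ Phi n ct ∧ ∃ i : Fin n, 0 < v i ∧ ∀ j : Fin n, j < i → v j = 0}

/-- The simple root `α_{i+1}` (`0`-based index `i`). -/
def alphaR (n : ℕ) (ct : CType) (i : Fin n) : V n :=
  if h : i.1 + 1 < n then ee i - ee ⟨i.1 + 1, h⟩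
  else
    match ct with
    | CType.B => ee i
    | CType.C => (2:ℝ) • ee i
    | CType.D => ee ⟨n - 2, Nat.sub_lt i.pos (by norm_num)⟩ + ee i

/-- The subsystem `Φ_I` generated by the simple roots indexed by `I`. -/
def PhiI (n : ℕ) (ct : CType) (I : Finset (Fin n)) : Set (V n) :=
  Phi n ct ∩ (Submodule.span ℝ (alphaR n ct '' (I : Set (Fin n))) : Set (V n))

/-- `λ` is `Φ_I`-regular. -/
def RegI (n : ℕ) (ct : CType) (I : Finset (Fin n)) (lam : V n) : Prop :=
  ∀ β ∈ PhiI n ct I, inn lam β ≠ 0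

/-- `λ` is integral. -/
def IntegralW (n : ℕ) (ct : CType) (lam : V n) : Prop :=
  ∀ β ∈ Phi n ct, ∃ k : ℤ, 2 * inn lam β / inn β β = (k : ℝ)

/-- `λ` is dominant. -/
def DominantW (n : ℕ) (ct : CType) (lam : V n) : Prop :=
  ∀ i : Fin n, 0 ≤ inn lam (alphaR n ct i)

/-- `μ` lies in the `W_I`-orbit of `λ` (`W_I` generated by the reflections `s_α`, `α ∈ I`). -/
def WIOrb (n : ℕ) (ct : CType) (I : Finset (Fin n)) : V n → V n → Prop :=
  Relation.ReflTransGen (fun x y => ∃ i ∈ I, y = sRefl (alphaR n ct i) x)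

/-- `μ` lies in the `W`-orbit of `λ`. -/
def WOrb (n : ℕ) (ct : CType) : V n → V n → Prop := WIOrb n ct Finset.univ

/-- `λ ∈ Λ_I⁺`. -/
def LamIPlus (n : ℕ) (ct : CType) (I : Finset (Fin n)) (lam : V n) : Prop :=
  IntegralW n ct lam ∧ ∀ i ∈ I, 0 < inn lam (alphaR n ct i)

/-- The sorted list `q_1 < q_2 < … < q_{m-1}` (`1`-based values) of indices of `Δ∖I`. -/
def Qlist (n : ℕ) (I : Finset (Fin n)) : List ℕ :=
  ((Finset.univ \ I).sort (· ≤ ·)).map (fun j => j.1 + 1)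

/-- The number `m` of segments determined by `I`. -/
def mval (n : ℕ) (I : Finset (Fin n)) : ℕ := (Qlist n I).length + 1

/-- `q_s`, with the conventions `q_0 = 0` and `q_m = n`. -/
def qval (n : ℕ) (I : Finset (Fin n)) (s : ℕ) : ℕ :=
  if s = 0 then 0 else if s < mval n I then (Qlist n I).getD (s - 1) 0 else n

/-- `I` is standard (automatic in types `B`, `C`). -/
def StandardI (n : ℕ) (ct : CType) (I : Finset (Fin n)) : Prop :=
  ct = CType.D → ∀ h : 2 ≤ n,
    ((⟨n - 2, by omega⟩ : Fin n) ∈ I ∨ (⟨n - 1, by omega⟩ : Fin n) ∉ I)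

/-- `q_s`, corrected for nonstandard `I` (where `q_{m-1}` is replaced by `n`,
so that the `(m-1)`-st segment is `(q_{m-2}, n]` and the `m`-th segment is empty). -/
def qv (n : ℕ) (ct : CType) (I : Finset (Fin n)) (s : ℕ) : ℕ :=
  if ¬ StandardI n ct I ∧ s = mval n I - 1 then n else qval n I s

/-- The segment length `n_s`. -/
def nsval (n : ℕ) (ct : CType) (I : Finset (Fin n)) (s : ℕ) : ℕ :=
  qv n ct I s - qv n ct I (s - 1)

/-- The (`0`-based) index `i` lies in the `s`-th segment, i.e. `q_{s-1} < i+1 ≤ q_s`. -/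
def InSeg (n : ℕ) (ct : CType) (I : Finset (Fin n)) (s : ℕ) (i : Fin n) : Prop :=
  qv n ct I (s - 1) < i.1 + 1 ∧ i.1 + 1 ≤ qv n ct I s

/-- `n_s^λ(a)`: the number of entries of the `s`-th segment of `λ` with absolute value `a`. -/
def nsl (n : ℕ) (ct : CType) (I : Finset (Fin n)) (lam : V n) (s : ℕ) (a : ℝ) : ℕ :=
  (Finset.univ.filter (fun i : Fin n => InSeg n ct I s i ∧ |lam i| = a)).card

/-- `a_t = λ̄_{q̄_t}` for `1 ≤ t < m̄`, and `a_{m̄} = 0`. -/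
def aval (n : ℕ) (ct : CType) (J : Finset (Fin n)) (lbar : V n) (t : ℕ) : ℝ :=
  if t < mval n J then
    (if h : qv n ct J t - 1 < n then lbar ⟨qv n ct J t - 1, h⟩ else 0)
  else 0

/-- `n_s^λ(a)` is maximal among all `Φ_I`-regular weights in the orbit of `λ`. -/
def IsMaxN (n : ℕ) (ct : CType) (I : Finset (Fin n)) (lam : V n) (s : ℕ) (a : ℝ) : Prop :=
  ∀ mu : V n, WOrb n ct lam mu → RegI n ct I mu →
    nsl n ct I mu s a ≤ nsl n ct I lam s a

/-- The exceptional configurations of Proposition 4.7 (types `B` and `C`, with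
`shortR i` the short/long root `e_i` resp. `2e_i`). -/
def ExcBC (n : ℕ) (ct : CType) (I : Finset (Fin n)) (shortR : Fin n → V n)
    (lam β : V n) : Prop :=
  ∃ s : ℕ, 1 ≤ s ∧ s < mval n I ∧ ∃ a : ℝ, 0 < a ∧
    nsl n ct I lam s a = 1 ∧
    nsl n ct I lam s 0 + nsl n ct I lam (mval n I) a = 1 ∧
    ((∃ i j : Fin n, InSeg n ct I s i ∧ InSeg n ct I s j ∧
        |lam i| = a ∧ lam j = 0 ∧ (β = shortR i ∨ β = ee i + ee j)) ∨
     (∃ i j : Fin n, InSeg n ct I s i ∧ InSeg n ct I (mval n I) j ∧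
        ((lam i = a ∧ lam j = a) ∨ (lam i = -a ∧ lam j = -a)) ∧
        (β = shortR i ∨ β = ee i + ee j)) ∨
     (∃ i j : Fin n, InSeg n ct I s i ∧ InSeg n ct I (mval n I) j ∧
        ((lam i = a ∧ lam j = -a) ∨ (lam i = -a ∧ lam j = a)) ∧
        (β = shortR i ∨ β = ee i - ee j)))

/-- The exceptional configurations of Proposition 4.7 (type `D`). -/
def ExcD (n : ℕ) (I : Finset (Fin n)) (lam β : V n) : Prop :=
  ∃ s : ℕ, 1 ≤ s ∧ s < mval n I ∧ ∃ a : ℝ, 0 < a ∧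
    nsl n CType.D I lam s a = 1 ∧ nsl n CType.D I lam (mval n I) a = 1 ∧
    nsl n CType.D I lam s 0 = 1 ∧ nsl n CType.D I lam (mval n I) 0 = 1 ∧
    ∃ i j k l : Fin n, InSeg n CType.D I s i ∧ InSeg n CType.D I s j ∧
      InSeg n CType.D I (mval n I) k ∧ InSeg n CType.D I (mval n I) l ∧
      lam j = 0 ∧ lam l = 0 ∧
      ((((lam i = a ∧ lam k = a) ∨ (lam i = -a ∧ lam k = -a)) ∧
          (β = ee i + ee j ∨ β = ee i + ee k)) ∨
       (((lam i = a ∧ lam k = -a) ∨ (lam i = -a ∧ lam k = a)) ∧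
          (β = ee i + ee j ∨ β = ee i - ee k)))

/-- The exceptional configurations in which `β` fails to be a linked root. -/
def Exc (n : ℕ) (ct : CType) (I : Finset (Fin n)) (lam β : V n) : Prop :=
  match ct with
  | CType.B => ExcBC n CType.B I (fun i => ee i) lam β
  | CType.C => ExcBC n CType.C I (fun i => (2:ℝ) • ee i) lam β
  | CType.D => ExcD n I lam β

/-- `β` is a linked root of the `Φ_I`-regular weight `λ` (for standard `I`). -/
def PlainLinked (n : ℕ) (ct : CType) (I : Finset (Fin n)) (lam β : V n) : Prop :=
  RegI n ct I lam ∧ β ∈ PhiPos n ct ∧ β ∉ PhiI n ct I ∧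
  RegI n ct I (sRefl β lam) ∧ sRefl β lam ≠ lam ∧ ¬ Exc n ct I lam β

/-- The transposition of the last two indices. -/
def swapLast (n : ℕ) (j : Fin n) : Fin n :=
  if j.1 = n - 1 then ⟨n - 2, Nat.sub_lt j.pos (by norm_num)⟩
  else if j.1 = n - 2 then ⟨n - 1, Nat.sub_lt j.pos (by norm_num)⟩
  else j

/-- The isomorphism `φ = s_{e_n}` (negating the last coordinate). -/
def phiW {n : ℕ} (x : V n) : V n := fun j => if j.1 = n - 1 then -x j else x j

/-- The image `φ(I)` of an index set under `φ` (interchanging `α_{n-1}` and `α_n`). -/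
def phiIdx (n : ℕ) (I : Finset (Fin n)) : Finset (Fin n) := I.image (swapLast n)

/-- `β` is a linked root of `λ`; for nonstandard `I` the notion is transported along `φ`. -/
def LinkedRoot (n : ℕ) (ct : CType) (I : Finset (Fin n)) (lam β : V n) : Prop :=
  if StandardI n ct I then PlainLinked n ct I lam β
  else PlainLinked n ct (phiIdx n I) (phiW lam) (phiW β)

/-- One step in a connecting chain: `y ∈ W_I x`, or `y = w s_β x` for a linked root `β` of `x`. -/
def ConnStep (n : ℕ) (ct : CType) (I : Finset (Fin n)) (x y : V n) : Prop :=
  RegI n ct I x ∧ RegI n ct I y ∧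
  (WIOrb n ct I x y ∨ ∃ β : V n, LinkedRoot n ct I x β ∧ WIOrb n ct I (sRefl β x) y)

/-- `λ ⟷ μ`: `λ` and `μ` are connected by a chain of linked roots. -/
def Conn (n : ℕ) (ct : CType) (I : Finset (Fin n)) (lam mu : V n) : Prop :=
  RegI n ct I lam ∧ RegI n ct I mu ∧
  Relation.ReflTransGen (ConnStep n ct I) lam mu

/-- The set `^IW^Jλ̄ = Wλ̄ ∩ Λ_I⁺` of weights parametrizing the simple modules. -/
def IWJset (n : ℕ) (ct : CType) (I : Finset (Fin n)) (lbar : V n) : Set (V n) :=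
  {mu | WOrb n ct lbar mu ∧ LamIPlus n ct I mu}

/-- `(S, S̄)` is a separable pair for the weight `λ`. -/
def IsSepPair (n : ℕ) (ct : CType) (I J : Finset (Fin n)) (lbar lam : V n)
    (S Sb : Finset ℕ) : Prop :=
  S.Nonempty ∧ Sb.Nonempty ∧
  S ⊆ Finset.Icc 1 (mval n I) ∧ Sb ⊆ Finset.Icc 1 (mval n J) ∧
  1 < mval n I ∧ 1 < mval n J ∧
  (∀ s ∈ S, ∀ t ∈ Sb, IsMaxN n ct I lam s (aval n ct J lbar t)) ∧
  (∀ s ∈ Finset.Icc 1 (mval n I), s ∉ S →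
     ∀ t ∈ Finset.Icc 1 (mval n J), t ∉ Sb →
       nsl n ct I lam s (aval n ct J lbar t) = 0) ∧
  (match ct with
   | CType.B => (mval n I ∈ S ↔ mval n J ∉ Sb)
   | CType.C => (mval n I ∈ S ↔ mval n J ∉ Sb)
   | CType.D => (mval n I ∈ S ↔ mval n J ∈ Sb))

/-- `𝒟`: the set of separable pairs of the system `(Φ, Φ_I, Φ_J)`. -/
def DSet (n : ℕ) (ct : CType) (I J : Finset (Fin n)) (lbar : V n) :
    Set (Finset ℕ × Finset ℕ) :=
  {p | ∀ lam ∈ IWJset n ct I lbar, IsSepPair n ct I J lbar lam p.1 p.2}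

/-- The four weakly separable pairs. -/
def IsWeakPair (n : ℕ) (I J : Finset (Fin n)) (p : Finset ℕ × Finset ℕ) : Prop :=
  p = (Finset.Icc 1 (mval n I - 1), {mval n J}) ∨
  p = (Finset.Icc 1 (mval n I), {mval n J}) ∨
  p = ({mval n I}, Finset.Icc 1 (mval n J - 1)) ∨
  p = ({mval n I}, Finset.Icc 1 (mval n J))

/-- The system `(Φ, Φ_I, Φ_J)` is separable. -/
def SepSys (n : ℕ) (ct : CType) (I J : Finset (Fin n)) (lbar : V n) : Prop :=
  (DSet n ct I J lbar).Nonempty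

/-- The system `(Φ, Φ_I, Φ_J)` is strongly separable. -/
def StronglySepSys (n : ℕ) (ct : CType) (I J : Finset (Fin n)) (lbar : V n) : Prop :=
  ∃ p ∈ DSet n ct I J lbar, ¬ IsWeakPair n I J p

/-- The system `(Φ, Φ_I, Φ_J)` is weakly separable. -/
def WeaklySepSys (n : ℕ) (ct : CType) (I J : Finset (Fin n)) (lbar : V n) : Prop :=
  SepSys n ct I J lbar ∧ ∀ p ∈ DSet n ct I J lbar, IsWeakPair n I J p

/-- The partial ordering on separable pairs: `(S₁,S̄₁) ≤ (S₂,S̄₂)` iff `S₁ ⊆ S₂`, `S̄₁ ⊇ S̄₂`. -/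
def pairLE (p q : Finset ℕ × Finset ℕ) : Prop := p.1 ⊆ q.1 ∧ q.2 ⊆ p.2

/-- Strict version of `pairLE`. -/
def pairLT (p q : Finset ℕ × Finset ℕ) : Prop := pairLE p q ∧ p ≠ q

/-- The generating relations of the equivalence `∼` on `𝒟`. -/
def PairRel (D : Set (Finset ℕ × Finset ℕ)) (p q : Finset ℕ × Finset ℕ) : Prop :=
  p ∈ D ∧ q ∈ D ∧ ((p.2 = q.2 ∧ p.1 ⊆ q.1) ∨ (p.1 = q.1 ∧ p.2 ⊆ q.2))

/-- The equivalence relation `∼` on separable pairs. -/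
def PairEquiv (D : Set (Finset ℕ × Finset ℕ)) :
    Finset ℕ × Finset ℕ → Finset ℕ × Finset ℕ → Prop :=
  Relation.EqvGen (PairRel D)

/-- A trivial separable pair. -/
def TrivialPair (n : ℕ) (ct : CType) (I J : Finset (Fin n)) (lbar : V n)
    (p : Finset ℕ × Finset ℕ) : Prop :=
  match ct with
  | CType.B | CType.C =>
    (∃ s0 : ℕ, 1 ≤ s0 ∧ s0 < mval n I ∧
       PairEquiv (DSet n ct I J lbar) p ({s0}, Finset.Icc 1 (mval n J))) ∨
    (∃ t0 : ℕ, 1 ≤ t0 ∧ t0 < mval n J ∧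
       PairEquiv (DSet n ct I J lbar) p (Finset.Icc 1 (mval n I), {t0}))
  | CType.D =>
    (∃ s0 : ℕ, 1 ≤ s0 ∧ s0 < mval n I ∧
       PairEquiv (DSet n ct I J lbar) p ({s0}, Finset.Icc 1 (mval n J - 1))) ∨
    (∃ t0 : ℕ, 1 ≤ t0 ∧ t0 < mval n J ∧
       PairEquiv (DSet n ct I J lbar) p (Finset.Icc 1 (mval n I - 1), {t0}))

/-- The set of blocks: equivalence classes of `^IW^Jλ̄` under `⟷`. -/
def BlockSet (n : ℕ) (ct : CType) (I : Finset (Fin n)) (lbar : V n) : Set (Set (V n)) :=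
  {Cl | ∃ lam ∈ IWJset n ct I lbar,
     Cl = {mu | mu ∈ IWJset n ct I lbar ∧ Conn n ct I lam mu}}

/-- The parity `P(λ)` of the number of negative entries of `λ`. -/
def Pfun (n : ℕ) (lam : V n) : ℕ :=
  (Finset.univ.filter (fun i : Fin n => lam i < 0)).card % 2

/-- A fundamental chain `c 1 ∼ c 2 ∼ … ∼ c k` in `𝒟`. -/
def IsFundChain (D : Set (Finset ℕ × Finset ℕ)) (c : ℕ → Finset ℕ × Finset ℕ)
    (k : ℕ) : Prop :=
  1 ≤ k ∧ (∀ i, 1 ≤ i → i ≤ k → c i ∈ D) ∧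
  (∀ i, 1 ≤ i → i < k →
     ((c i).1 = (c (i+1)).1 ∨ (c i).2 = (c (i+1)).2) ∧
     (pairLT (c i) (c (i+1)) ∨ pairLT (c (i+1)) (c i)))

/-- The list of parts of the partition `π_I`. -/
def piParts (n : ℕ) (ct : CType) (I : Finset (Fin n)) : List ℕ :=
  (List.range (mval n I - 1)).map (fun s => nsval n ct I (s+1)) ++
  (List.range (mval n I - 1)).map (fun s => nsval n ct I (s+1)) ++
  (match ct with
   | CType.B => [2 * nsval n ct I (mval n I) + 1]
   | CType.C => [2 * nsval n ct I (mval n I)]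
   | CType.D => if nsval n ct I (mval n I) = 0 then []
                else [2 * nsval n ct I (mval n I) - 1, 1])

/-- The `i`-th part (`1`-based) of the partition with list of parts `L`. -/
def partAt (L : List ℕ) (i : ℕ) : ℕ :=
  (L.mergeSort (fun a b => decide (b ≤ a))).getD (i - 1) 0

/-- The `i`-th part (`1`-based) of the dual partition `π^t`: the number of parts `≥ i`. -/
def dualAt (L : List ℕ) (i : ℕ) : ℕ :=
  (L.filter (fun x => decide (i ≤ x))).length

/-- `k` is compatible with the system `(Φ, Φ_I, Φ_J)`. -/
def CompatibleK (n : ℕ) (ct : CType) (I J : Finset (Fin n)) (k : ℕ) : Prop :=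
  1 ≤ k ∧ k ≤ 2 * mval n I - 1 ∧
  (match ct with
   | CType.B =>
     (Odd k ∧ k ≤ partAt (piParts n CType.B J) 2 ∧
        2 * nsval n CType.B J (mval n J) + 1 ≤ k ∧
        partAt (piParts n CType.B I) k ≤ 2 * nsval n CType.B I (mval n I) + 1) ∨
     (Even k ∧ k ≤ 2 * nsval n CType.B J (mval n J) ∧
        2 * nsval n CType.B I (mval n I) + 1 ≤ partAt (piParts n CType.B I) k)
   | CType.C =>
     (Odd k ∧ k ≤ partAt (piParts n CType.C J) 2 ∧
        2 * nsval n CType.C J (mval n J) + 1 ≤ k ∧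
        partAt (piParts n CType.C I) k ≤ 2 * nsval n CType.C I (mval n I)) ∨
     (Even k ∧ k ≤ 2 * nsval n CType.C J (mval n J) ∧
        2 * nsval n CType.C I (mval n I) + 1 ≤ partAt (piParts n CType.C I) k)
   | CType.D =>
     (Even k ∧ k ≤ partAt (piParts n CType.D J) 2 ∧
        2 * nsval n CType.D J (mval n J) ≤ k ∧
        2 * nsval n CType.D I (mval n I) ≤ partAt (piParts n CType.D I) k) ∨
     (Odd k ∧ k ≤ 2 * nsval n CType.D J (mval n J) - 1 ∧
        partAt (piParts n CType.D I) k ≤ 2 * nsval n CType.D I (mval n I) - 1))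

/-- `s_{e_{k_1}}^{ε_1} ⋯ s_{e_{k_r}}^{ε_r} μ`. -/
def applyFlips (n : ℕ) (ks : ℕ → Fin n) (eps : ℕ → Bool) : ℕ → V n → V n
  | 0, v => v
  | (r+1), v =>
      if eps (r+1) then sRefl (ee (ks (r+1))) (applyFlips n ks eps r v)
      else applyFlips n ks eps r v

end

/-!
For a weight `x` let `X` be the set of indices lying in a segment from `S`, and `Y x` the set of
indices `i` with `|x i|` among the values `a_t`, `t ∈ S̄`. Reflections in simple roots permute the
absolute values of the entries, so `|X ∪ Y x| + |X ∩ Y x| = |X| + |Y x|` is constant on Weyl group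
orbits. Condition (iii) says that `X ∪ Y x` contains every index, and `|X ∩ Y x|` is the sum of the
counts which condition (ii) asks to be maximal. At a separable `λ` both terms are therefore as
large as they can be for a `Φ_I`-regular weight. If `μ` is `Φ_I`-regular in the orbit, neither of
its terms can exceed that of `λ`, so both agree with it, and so does each of the counts summing up
to `|X ∩ Y μ|`.
-/

section DoubleCounting

open Finset

variable {ι κ α : Type*} [Fintype ι] [DecidableEq κ] [DecidableEq α]

lemma sum_card_filter_eq_and_eq (σ : ι → κ) (v : ι → α) (S : Finset κ) (T : Finset α) :
    ∑ p ∈ S ×ˢ T, #{i | σ i = p.1 ∧ v i = p.2} = #{i | σ i ∈ S ∧ v i ∈ T} := by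
  simpa only [Prod.ext_iff, mem_product] using
    sum_card_fiberwise_eq_card_filter univ (S ×ˢ T) fun i => (σ i, v i)

lemma card_filter_or_add_card_filter_and (p q : ι → Prop) [DecidablePred p] [DecidablePred q] :
    #{i | p i ∨ q i} + #{i | p i ∧ q i} = #{i | p i} + #{i | q i} := by
  rw [filter_or, filter_and, card_union_add_card_inter]

theorem cover_and_card_eq_of_card_le {σ : ι → κ} {v w : ι → α} {S : Finset κ} {T : Finset α}
    (hcover : ∀ i, σ i ∈ S ∨ v i ∈ T) (π : Equiv.Perm ι) (hπ : ∀ i, w i = v (π i))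
    (hle : ∀ s ∈ S, ∀ t ∈ T, #{i | σ i = s ∧ w i = t} ≤ #{i | σ i = s ∧ v i = t}) :
    (∀ i, σ i ∈ S ∨ w i ∈ T) ∧
      ∀ s ∈ S, ∀ t ∈ T, #{i | σ i = s ∧ w i = t} = #{i | σ i = s ∧ v i = t} := by
  have hle' : ∀ p ∈ S ×ˢ T,
      #{i | σ i = p.1 ∧ w i = p.2} ≤ #{i | σ i = p.1 ∧ v i = p.2} := fun p hp =>
    hle p.1 (mem_product.1 hp).1 p.2 (mem_product.1 hp).2
  have hinter := sum_le_sum hle'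
  have huniv : #{i | σ i ∈ S ∨ v i ∈ T} = #(univ : Finset ι) :=
    congrArg card (filter_true_of_mem fun i _ => hcover i)
  have hunion : #{i | σ i ∈ S ∨ w i ∈ T} ≤ #(univ : Finset ι) := card_filter_le _ _
  have hvalues : #{i | w i ∈ T} = #{i | v i ∈ T} := card_equiv π fun i => by simp [hπ]
  have hv := card_filter_or_add_card_filter_and (σ · ∈ S) (v · ∈ T)
  have hw := card_filter_or_add_card_filter_and (σ · ∈ S) (w · ∈ T)
  rw [← sum_card_filter_eq_and_eq] at hv hw
  constructor
  · have hfull : #{i | σ i ∈ S ∨ w i ∈ T} = #(univ : Finset ι) := by lia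
    exact fun i => card_filter_eq_iff.1 hfull i (mem_univ i)
  · have hsum := (sum_eq_sum_iff_of_le hle').1 (by lia)
    exact fun s hs t ht => hsum (s, t) (mk_mem_product hs ht)

end DoubleCounting

section Reflections

variable {n : ℕ} {ct : CType}

@[simp]
lemma inn_ee (x : V n) (i : Fin n) : inn x (ee i) = x i := dotProduct_single_one x i

@[simp]
lemma inn_add (x y z : V n) : inn x (y + z) = inn x y + inn x z := dotProduct_add x y z

@[simp]
lemma inn_sub (x y z : V n) : inn x (y - z) = inn x y - inn x z := dotProduct_sub x y z

@[simp]
lemma inn_neg (x y : V n) : inn x (-y) = -inn x y := dotProduct_neg x y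

@[simp]
lemma inn_smul (x : V n) (c : ℝ) (y : V n) : inn x (c • y) = c * inn x y := dotProduct_smul c x y

lemma ee_apply (i k : Fin n) : ee i k = if k = i then 1 else 0 := Pi.single_apply i 1 k

lemma abs_sRefl_smul_ee (c : ℝ) (i : Fin n) (x : V n) (k : Fin n) :
    |sRefl (c • ee i) x k| = |x k| := by
  rcases eq_or_ne c 0 with rfl | hc
  · simp [sRefl]
  rcases eq_or_ne k i with rfl | hki
  · have hk : sRefl (c • ee k) x k = -x k := by
      simp only [sRefl, inn_smul, inn_ee, Pi.sub_apply, Pi.smul_apply, ee_apply, if_true,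
        smul_eq_mul]
      field_simp
      ring
    rw [hk, abs_neg]
  · simp [sRefl, ee_apply, hki]

lemma sRefl_ee_add_smul_ee {c : ℝ} (hc : c * c = 1) {i j : Fin n} (hij : i ≠ j) (x : V n) :
    sRefl (ee i + c • ee j) x = x - (x i + c * x j) • (ee i + c • ee j) := by
  have hnorm : inn (ee i + c • ee j) (ee i + c • ee j) = 2 := by
    simp only [inn_add, inn_smul, inn_ee, Pi.add_apply, Pi.smul_apply, ee_apply, if_true, hij,
      hij.symm, if_false, smul_eq_mul]
    linear_combination hc
  rw [sRefl, hnorm, inn_add, inn_smul, inn_ee, inn_ee, mul_div_cancel_left₀ _ two_ne_zero]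

lemma abs_sRefl_ee_add_smul_ee {c : ℝ} (hc : |c| = 1) {i j : Fin n} (hij : i ≠ j) (x : V n)
    (k : Fin n) : |sRefl (ee i + c • ee j) x k| = |x (Equiv.swap i j k)| := by
  have hcc : c * c = 1 := by rw [← abs_mul_abs_self, hc, one_mul]
  rw [sRefl_ee_add_smul_ee hcc hij]
  rcases eq_or_ne k i with rfl | hki
  · have hk : (x - (x k + c * x j) • (ee k + c • ee j)) k = -(c * x j) := by
      simp [ee_apply, hij]
    rw [hk, abs_neg, abs_mul, hc, one_mul, Equiv.swap_apply_left]
  rcases eq_or_ne k j with rfl | hkj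
  · have hk : (x - (x i + c * x k) • (ee i + c • ee k)) k = -(c * x i) := by
      simp only [Pi.sub_apply, Pi.smul_apply, Pi.add_apply, ee_apply, hki, if_false, if_true,
        smul_eq_mul]
      linear_combination (-x k) * hcc
    rw [hk, abs_neg, abs_mul, hc, one_mul, Equiv.swap_apply_right]
  · rw [Equiv.swap_apply_of_ne_of_ne hki hkj]
    simp [ee_apply, hki, hkj]

lemma exists_perm_abs_sRefl_alphaR (ct : CType) (i : Fin n) (x : V n) :
    ∃ π : Equiv.Perm (Fin n), ∀ k, |sRefl (alphaR n ct i) x k| = |x (π k)| := by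
  unfold alphaR
  split_ifs with hi
  · refine ⟨Equiv.swap i ⟨i + 1, hi⟩, fun k => ?_⟩
    have hne : i ≠ ⟨i + 1, hi⟩ := by simp [Fin.ext_iff]
    simpa [sub_eq_add_neg] using abs_sRefl_ee_add_smul_ee (c := -1) (by simp) hne x k
  · cases ct
    case B => exact ⟨1, fun k => by simpa using abs_sRefl_smul_ee 1 i x k⟩
    case C => exact ⟨1, abs_sRefl_smul_ee 2 i x⟩
    case D =>
      rcases eq_or_ne ⟨n - 2, Nat.sub_lt i.pos (by norm_num)⟩ i with h | h
      · exact ⟨1, fun k => by simpa [h, two_smul] using abs_sRefl_smul_ee 2 i x k⟩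
      · exact ⟨_, fun k => by simpa using abs_sRefl_ee_add_smul_ee abs_one h x k⟩

lemma exists_perm_abs_eq_of_wIOrb {I : Finset (Fin n)} {x y : V n} (h : WIOrb n ct I x y) :
    ∃ π : Equiv.Perm (Fin n), ∀ k, |y k| = |x (π k)| := by
  induction h with
  | refl => exact ⟨1, fun _ => rfl⟩
  | tail _ hstep ih =>
    obtain ⟨i, -, rfl⟩ := hstep
    obtain ⟨π, hπ⟩ := ih
    obtain ⟨ρ, hρ⟩ := exists_perm_abs_sRefl_alphaR ct i _
    exact ⟨π * ρ, fun k => by rw [hρ, hπ, Equiv.Perm.mul_apply]⟩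

lemma forall_abs_iff_of_wIOrb {I : Finset (Fin n)} {x y : V n} (h : WIOrb n ct I x y)
    (p : ℝ → Prop) : (∀ k, p |y k|) ↔ ∀ k, p |x k| := by
  obtain ⟨π, hπ⟩ := exists_perm_abs_eq_of_wIOrb h
  simp only [hπ]
  exact π.forall_congr_right (q := fun k => p |x k|)

end Reflections

section Dominance

variable {n : ℕ} {ct : CType} {x : V n}

lemma inn_alphaR_of_lt (x : V n) {i : Fin n} (h : i.1 + 1 < n) :
    inn x (alphaR n ct i) = x i - x ⟨i + 1, h⟩ := by
  simp only [alphaR, dif_pos h, inn_sub, inn_ee]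

lemma inn_alphaR_of_not_lt (x : V n) {i : Fin n} (h : ¬ i.1 + 1 < n) :
    inn x (alphaR n ct i) =
      match ct with
      | CType.B => x i
      | CType.C => 2 * x i
      | CType.D => x ⟨n - 2, Nat.sub_lt i.pos two_pos⟩ + x i := by
  cases ct <;> simp only [alphaR, dif_neg h, inn_ee, inn_smul, inn_add]

lemma DominantW.antitone (hx : DominantW n ct x) : Antitone x := by
  cases n with
  | zero => exact Subsingleton.antitone x
  | succ n =>
    refine Fin.antitone_iff_succ_le.2 fun i => sub_nonneg.1 ?_
    have hi := hx i.castSucc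
    rwa [inn_alphaR_of_lt x (by simp)] at hi

lemma DominantW.lt_of_lt (hx : DominantW n ct x) {k j : Fin n} (hkj : k < j)
    (hk : inn x (alphaR n ct k) ≠ 0) : x j < x k := by
  have hlt : k.1 + 1 < n := by lia
  rw [inn_alphaR_of_lt x hlt, sub_ne_zero] at hk
  have hstep : x ⟨k + 1, hlt⟩ ≤ x k := hx.antitone (Fin.le_def.2 (Nat.le_succ _))
  exact (hx.antitone (show (⟨k + 1, hlt⟩ : Fin n) ≤ j from hkj)).trans_lt (hstep.lt_of_ne' hk)

lemma apply_last_eq_zero {l : Fin n} (hl : ¬ l.1 + 1 < n)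
    (hx : inn x (alphaR n ct l) = 0)
    (hD : ct = CType.D → x ⟨n - 2, Nat.sub_lt l.pos two_pos⟩ = x l) : x l = 0 := by
  rw [inn_alphaR_of_not_lt x hl] at hx
  cases ct with
  | B => exact hx
  | C => linarith
  | D => linarith [hD rfl]

lemma eq_zero_of_forall_inn_alphaR_eq_zero (hx : ∀ i, inn x (alphaR n ct i) = 0) : x = 0 := by
  have hdom : DominantW n ct x := fun i => (hx i).ge
  have hdom_neg : DominantW n ct (-x) := fun i => by
    rw [show inn (-x) (alphaR n ct i) = -inn x (alphaR n ct i) from neg_dotProduct x _, hx,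
      neg_zero]
  have hle {i j : Fin n} (hij : i ≤ j) : x i = x j :=
    le_antisymm (neg_le_neg_iff.1 (hdom_neg.antitone hij)) (hdom.antitone hij)
  funext i
  let l : Fin n := ⟨n - 1, Nat.sub_lt i.pos one_pos⟩
  calc x i = x l := hle (Fin.le_def.2 (Nat.le_sub_one_of_lt i.2))
    _ = 0 := apply_last_eq_zero (by lia) (hx l) fun _ =>
      hle (Fin.le_def.2 (Nat.sub_le_sub_left one_le_two n))

lemma exists_inn_alphaR_eq (ct : CType) (c : Fin n → ℝ) :
    ∃ y : V n, ∀ i, inn y (alphaR n ct i) = c i := by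
  let A : Matrix (Fin n) (Fin n) ℝ := Matrix.of (alphaR n ct)
  have hA (y : V n) (i : Fin n) : A.mulVec y i = inn y (alphaR n ct i) := dotProduct_comm _ _
  have hinj : Function.Injective A.mulVecLin := by
    refine (injective_iff_map_eq_zero _).2 fun y hy =>
      eq_zero_of_forall_inn_alphaR_eq_zero (ct := ct) fun i => ?_
    rw [← hA]
    exact congrFun hy i
  obtain ⟨y, hy⟩ := LinearMap.surjective_of_injective hinj c
  exact ⟨y, fun i => by rw [← hA]; exact congrFun hy i⟩

lemma add_pos_of_forall_inn_alphaR_pos (hx : ∀ i, 0 < inn x (alphaR n ct i)) {i j : Fin n}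
    (hij : i < j) : 0 < x i + x j := by
  let l : Fin n := ⟨n - 1, Nat.sub_lt i.pos one_pos⟩
  let k : Fin n := ⟨n - 2, Nat.sub_lt i.pos two_pos⟩
  have hmono : Antitone x := DominantW.antitone fun i => (hx i).le
  have hik : x k ≤ x i := hmono (Fin.le_def.2 (by lia))
  have hjl : x l ≤ x j := hmono (Fin.le_def.2 (by lia))
  have hkl : x l ≤ x k := hmono (Fin.le_def.2 (by lia))
  have hl := hx l
  rw [inn_alphaR_of_not_lt x (by lia)] at hl
  cases ct <;> simp only at hl <;> linarith

lemma pos_of_forall_inn_alphaR_pos (hx : ∀ i, 0 < inn x (alphaR n ct i)) (hct : ct ≠ CType.D)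
    (i : Fin n) : 0 < x i := by
  let l : Fin n := ⟨n - 1, Nat.sub_lt i.pos one_pos⟩
  have hil : x l ≤ x i :=
    DominantW.antitone (fun j => (hx j).le) (Fin.le_def.2 (by lia))
  have hl := hx l
  rw [inn_alphaR_of_not_lt x (by lia)] at hl
  cases ct with
  | B => linarith
  | C => linarith
  | D => exact absurd rfl hct

lemma inn_ne_zero_of_mem_dRoots (hinj : Function.Injective x)
    (hadd : ∀ i j, i ≠ j → x i + x j ≠ 0) {β : V n} (hβ : β ∈ DRoots n) : inn x β ≠ 0 := by
  obtain ⟨i, j, hij, rfl | rfl | rfl⟩ := hβ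
  · rw [inn_add, inn_ee, inn_ee]
    exact hadd i j hij
  · rw [inn_sub, inn_ee, inn_ee, sub_ne_zero]
    exact hinj.ne hij
  · rw [inn_sub, inn_neg, inn_ee, inn_ee, ← neg_add', neg_ne_zero]
    exact hadd i j hij

lemma inn_ne_zero_of_forall_inn_alphaR_pos (hx : ∀ i, 0 < inn x (alphaR n ct i)) {β : V n}
    (hβ : β ∈ Phi n ct) : inn x β ≠ 0 := by
  have hanti : StrictAnti x := fun k j hkj =>
    DominantW.lt_of_lt (fun i => (hx i).le) hkj (hx k).ne'
  have hadd (i j : Fin n) (hij : i ≠ j) : x i + x j ≠ 0 := by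
    rcases hij.lt_or_gt with h | h
    · exact (add_pos_of_forall_inn_alphaR_pos hx h).ne'
    · rw [add_comm]
      exact (add_pos_of_forall_inn_alphaR_pos hx h).ne'
  have hD {β : V n} (hβ : β ∈ DRoots n) : inn x β ≠ 0 :=
    inn_ne_zero_of_mem_dRoots hanti.injective hadd hβ
  cases ct with
  | B =>
    obtain hβ | ⟨i, rfl | rfl⟩ := hβ
    · exact hD hβ
    all_goals simp [(pos_of_forall_inn_alphaR_pos hx (by simp) i).ne']
  | C =>
    obtain hβ | ⟨i, rfl | rfl⟩ := hβ
    · exact hD hβ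
    all_goals simp [(pos_of_forall_inn_alphaR_pos hx (by simp) i).ne']
  | D => exact hD hβ

lemma regI_of_forall_inn_alphaR_pos {I : Finset (Fin n)}
    (hx : ∀ i ∈ I, 0 < inn x (alphaR n ct i)) : RegI n ct I x := by
  rintro β ⟨hβ, hspan⟩
  -- On `Φ_I` the weight agrees with a strictly dominant one, which is nonzero on all of `Φ`.
  obtain ⟨y, hy⟩ := exists_inn_alphaR_eq ct fun i => if i ∈ I then inn x (alphaR n ct i) else 1
  have hpos (i : Fin n) : 0 < inn y (alphaR n ct i) := by
    rw [hy]
    split_ifs with hi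
    exacts [hx i hi, one_pos]
  have heq : inn x β = inn y β := by
    clear hβ
    induction hspan using Submodule.span_induction with
    | mem v hv =>
      obtain ⟨i, hi, rfl⟩ := hv
      exact (hy i).trans (if_pos hi) |>.symm
    | zero => rw [← zero_smul ℝ (0 : V n), inn_smul, inn_smul, zero_mul, zero_mul]
    | add v w _ _ hv hw => rw [inn_add, inn_add, hv, hw]
    | smul c v _ hv => rw [inn_smul, inn_smul, hv]
  rw [heq]
  exact inn_ne_zero_of_forall_inn_alphaR_pos hpos hβ

end Dominance

section Segments

open Finset

variable {n : ℕ} {ct : CType} {I : Finset (Fin n)}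

lemma mval_eq_card_compl_add_one (I : Finset (Fin n)) : mval n I = #Iᶜ + 1 := by
  rw [mval, Qlist, List.length_map, length_sort, compl_eq_univ_sdiff]

lemma qval_succ (r : Fin #Iᶜ) : qval n I (r + 1) = Iᶜ.orderEmbOfFin rfl r + 1 := by
  have hr : r + 1 < mval n I := by rw [mval_eq_card_compl_add_one]; lia
  rw [qval, if_neg (Nat.succ_ne_zero r), if_pos hr, orderEmbOfFin_apply]
  simp only [Qlist, compl_eq_univ_sdiff, Nat.add_sub_cancel]
  rw [List.getD_eq_getElem _ _ (by simp [← compl_eq_univ_sdiff]), List.getElem_map]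
  rfl

lemma qval_of_mval_le {s : ℕ} (hs : mval n I ≤ s) : qval n I s = n := by
  rw [qval, if_neg (by rw [mval] at hs; lia), if_neg hs.not_gt]

lemma qval_le (I : Finset (Fin n)) (s : ℕ) : qval n I s ≤ n := by
  rcases le_or_gt (mval n I) s with hs | hs
  · exact (qval_of_mval_le hs).le
  cases s with
  | zero => exact Nat.zero_le n
  | succ r =>
    rw [mval_eq_card_compl_add_one, Nat.add_lt_add_iff_right] at hs
    rw [qval_succ ⟨r, hs⟩]
    exact (Iᶜ.orderEmbOfFin rfl ⟨r, hs⟩).2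

lemma qval_monotone (I : Finset (Fin n)) : Monotone (qval n I) := by
  refine monotone_nat_of_le_succ fun s => ?_
  rcases le_or_gt (mval n I) (s + 1) with hs | hs
  · exact (qval_le I s).trans_eq (qval_of_mval_le hs).symm
  cases s with
  | zero => exact Nat.zero_le _
  | succ r =>
    rw [mval_eq_card_compl_add_one, Nat.add_lt_add_iff_right] at hs
    rw [qval_succ ⟨r, Nat.lt_of_succ_lt hs⟩, qval_succ ⟨r + 1, hs⟩, Nat.add_le_add_iff_right]
    exact (Iᶜ.orderEmbOfFin rfl).monotone (Fin.le_def.2 r.le_succ)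

lemma one_lt_mval_of_not_standardI (hI : ¬ StandardI n ct I) : 1 < mval n I := by
  simp only [StandardI, not_forall, not_or] at hI
  obtain ⟨-, hn, hmem, -⟩ := hI
  rw [mval_eq_card_compl_add_one, Nat.lt_add_left_iff_pos, card_pos]
  exact ⟨_, mem_compl.2 hmem⟩

lemma qv_zero (ct : CType) (I : Finset (Fin n)) : qv n ct I 0 = 0 := by
  rw [qv, if_neg, qval, if_pos rfl]
  rintro ⟨hI, hm⟩
  have := one_lt_mval_of_not_standardI hI
  lia

lemma qv_of_mval_le {s : ℕ} (hs : mval n I ≤ s) : qv n ct I s = n := by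
  rw [qv, qval_of_mval_le hs, ite_self]

lemma qv_monotone (ct : CType) (I : Finset (Fin n)) : Monotone (qv n ct I) := by
  refine monotone_nat_of_le_succ fun s => ?_
  have hle : qv n ct I s ≤ n := by
    unfold qv
    split_ifs
    exacts [le_rfl, qval_le I s]
  rcases le_or_gt (mval n I) (s + 1) with hs | hs
  · exact hle.trans_eq (qv_of_mval_le hs).symm
  · rw [qv, if_neg (by lia), qv]
    split_ifs
    exacts [qval_le I s, qval_monotone I s.le_succ]

lemma exists_succ_le_qv (ct : CType) (I : Finset (Fin n)) (i : Fin n) :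
    ∃ s, i.1 + 1 ≤ qv n ct I s := ⟨mval n I, by rw [qv_of_mval_le le_rfl]; exact i.2⟩

/-- The number of the segment of `I` containing the index `i`, so that the segments become the
fibres of a single function. -/
noncomputable def segIndex (n : ℕ) (ct : CType) (I : Finset (Fin n)) (i : Fin n) : ℕ :=
  Nat.find (exists_succ_le_qv ct I i)

lemma inSeg_iff_segIndex_eq {s : ℕ} {i : Fin n} : InSeg n ct I s i ↔ segIndex n ct I i = s := by
  rw [segIndex, Nat.find_eq_iff, InSeg, and_comm, and_congr_right_iff]
  refine fun hle => ⟨fun hlt r hr hle' => ?_, fun hmin => ?_⟩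
  · exact (hle'.trans (qv_monotone ct I (Nat.le_sub_one_of_lt hr))).not_gt hlt
  · refine not_le.1 (hmin (s - 1) (Nat.sub_lt (Nat.pos_of_ne_zero ?_) one_pos))
    rintro rfl
    simp [qv_zero] at hle

lemma segIndex_mem_Icc (ct : CType) (I : Finset (Fin n)) (i : Fin n) :
    segIndex n ct I i ∈ Icc 1 (mval n I) := by
  rw [mem_Icc, segIndex, Nat.one_le_iff_ne_zero, Ne, Nat.find_eq_zero, qv_zero]
  refine ⟨by lia, Nat.find_min' _ ?_⟩
  rw [qv_of_mval_le le_rfl]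
  exact i.2

lemma nsl_eq_card (x : V n) (s : ℕ) (a : ℝ) :
    nsl n ct I x s a = #{i | segIndex n ct I i = s ∧ |x i| = a} := by
  simp only [nsl, inSeg_iff_segIndex_eq]

end Segments

section Values

open Finset

variable {n : ℕ} {ct : CType} {J : Finset (Fin n)} {lbar : V n}

lemma standardI_of_aval_pos (hJ : ∀ i, i ∈ J ↔ inn lbar (alphaR n ct i) = 0)
    (hdom : DominantW n ct lbar) (hA : 0 < aval n ct J lbar (mval n J - 1)) :
    StandardI n ct J := by
  by_contra hstd
  have hm := one_lt_mval_of_not_standardI hstd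
  obtain ⟨rfl, hn, hmem, hmem'⟩ : ∃ (_ : ct = CType.D) (hn : 2 ≤ n),
      (⟨n - 2, by lia⟩ : Fin n) ∉ J ∧ (⟨n - 1, by lia⟩ : Fin n) ∈ J := by
    simpa only [StandardI, not_forall, not_or, not_not, exists_prop] using hstd
  have hlt : lbar ⟨n - 1, by lia⟩ < lbar ⟨n - 2, by lia⟩ :=
    hdom.lt_of_lt (Fin.lt_def.2 (by lia)) (mt (hJ _).2 hmem)
  have hsum := (hJ _).1 hmem'
  rw [inn_alphaR_of_not_lt lbar (by lia)] at hsum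
  rw [aval, if_pos (by lia), qv, if_pos ⟨hstd, rfl⟩, dif_pos (by lia)] at hA
  simp only at hsum
  linarith

lemma qv_of_standardI (hJ : StandardI n ct J) (s : ℕ) : qv n ct J s = qval n J s :=
  if_neg fun h => h.1 hJ

lemma aval_succ (hJ : StandardI n ct J) (r : Fin #Jᶜ) :
    aval n ct J lbar (r + 1) = lbar (Jᶜ.orderEmbOfFin rfl r) := by
  have hr : r + 1 < mval n J := by rw [mval_eq_card_compl_add_one]; lia
  simp [aval, hr, qv_of_standardI hJ, qval_succ]

lemma aval_mval (ct : CType) (J : Finset (Fin n)) (lbar : V n) :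
    aval n ct J lbar (mval n J) = 0 := if_neg (lt_irrefl _)

lemma aval_succ_pos (hdom : DominantW n ct lbar) (hstd : StandardI n ct J)
    (hA : 0 < aval n ct J lbar (mval n J - 1)) (r : Fin #Jᶜ) :
    0 < aval n ct J lbar (r + 1) := by
  let last : Fin #Jᶜ := ⟨#Jᶜ - 1, Nat.sub_lt r.pos one_pos⟩
  have hlast : mval n J - 1 = last + 1 := by
    rw [mval_eq_card_compl_add_one]
    exact (Nat.sub_add_cancel r.pos).symm
  rw [hlast, aval_succ hstd] at hA
  rw [aval_succ hstd]
  exact hA.trans_le <| hdom.antitone <| (Jᶜ.orderEmbOfFin rfl).monotone <|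
    Fin.le_def.2 (Nat.le_sub_one_of_lt r.2)

lemma strictAntiOn_aval (hJ : ∀ i, i ∈ J ↔ inn lbar (alphaR n ct i) = 0)
    (hdom : DominantW n ct lbar) (hA : 0 < aval n ct J lbar (mval n J - 1)) :
    StrictAntiOn (aval n ct J lbar) (Icc 1 (mval n J)) := by
  have hstd := standardI_of_aval_pos hJ hdom hA
  intro t ht u hu htu
  simp only [coe_Icc, Set.mem_Icc, mval_eq_card_compl_add_one] at ht hu
  obtain ⟨r, rfl⟩ : ∃ r : Fin #Jᶜ, t = r + 1 := ⟨⟨t - 1, by lia⟩, by lia⟩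
  rcases hu.2.eq_or_lt with rfl | hu'
  · rw [← mval_eq_card_compl_add_one, aval_mval]
    exact aval_succ_pos hdom hstd hA r
  · obtain ⟨q, rfl⟩ : ∃ q : Fin #Jᶜ, u = q + 1 := ⟨⟨u - 1, by lia⟩, by lia⟩
    rw [aval_succ hstd, aval_succ hstd]
    refine hdom.lt_of_lt ((Jᶜ.orderEmbOfFin rfl).strictMono (by lia)) (mt (hJ _).2 ?_)
    exact mem_compl.1 (orderEmbOfFin_mem Jᶜ rfl r)

lemma apply_last_eq_zero_of_mem (hJ : ∀ i, i ∈ J ↔ inn lbar (alphaR n ct i) = 0)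
    (hstd : StandardI n ct J) {i : Fin n} (hi : ¬ i.1 + 1 < n) (hiJ : i ∈ J) : lbar i = 0 := by
  refine apply_last_eq_zero hi ((hJ i).1 hiJ) fun hD => ?_
  have hlast : i = ⟨n - 1, Nat.sub_lt i.pos one_pos⟩ := Fin.ext (by lia)
  rcases lt_or_ge n 2 with hn | hn
  · exact congrArg lbar (Fin.ext (by lia))
  · have hmem := (hstd hD hn).resolve_right (not_not.2 (hlast ▸ hiJ))
    have heq := (hJ _).1 hmem
    rw [inn_alphaR_of_lt lbar (by lia), sub_eq_zero] at heq
    exact heq.trans (congrArg lbar (Fin.ext (by lia)))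

lemma exists_aval_eq_abs (hJ : ∀ i, i ∈ J ↔ inn lbar (alphaR n ct i) = 0)
    (hdom : DominantW n ct lbar) (hA : 0 < aval n ct J lbar (mval n J - 1)) (i : Fin n) :
    ∃ t ∈ Icc 1 (mval n J), aval n ct J lbar t = |lbar i| := by
  have hstd := standardI_of_aval_pos hJ hdom hA
  induction i using WellFoundedGT.induction with
  | ind i ih =>
  by_cases hiJ : i ∈ J
  · by_cases hi : i.1 + 1 < n
    · have heq := (hJ i).1 hiJ
      rw [inn_alphaR_of_lt lbar hi, sub_eq_zero] at heq
      rw [heq]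
      exact ih _ (Fin.lt_def.2 (Nat.lt_succ_self _))
    · refine ⟨mval n J, by simp [mval_eq_card_compl_add_one], ?_⟩
      rw [aval_mval, apply_last_eq_zero_of_mem hJ hstd hi hiJ, abs_zero]
  · obtain ⟨r, rfl⟩ : i ∈ Set.range (Jᶜ.orderEmbOfFin rfl) := by simpa using hiJ
    refine ⟨r + 1, by simp [mval_eq_card_compl_add_one], ?_⟩
    have hpos := aval_succ_pos hdom hstd hA r
    rw [aval_succ hstd] at hpos ⊢
    exact (abs_of_pos hpos).symm

end Values

section SeparablePairs

open Finset

variable {n : ℕ} {ct : CType} {I J : Finset (Fin n)} {x : V n}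

lemma forall_nsl_eq_zero_iff {a : ℕ → ℝ} {S T U : Finset ℕ} (hUT : U ⊆ T)
    (ha : Set.InjOn a T) (hx : ∀ i, |x i| ∈ T.image a) :
    (∀ s ∈ Icc 1 (mval n I), s ∉ S → ∀ t ∈ T, t ∉ U → nsl n ct I x s (a t) = 0) ↔
      ∀ i, segIndex n ct I i ∈ S ∨ |x i| ∈ U.image a := by
  simp only [nsl_eq_card, card_eq_zero, filter_eq_empty_iff, mem_univ, true_imp_iff, not_and]
  constructor
  · intro h i
    obtain ⟨t, htT, hta⟩ := mem_image.1 (hx i)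
    by_contra! hi
    refine h _ (segIndex_mem_Icc ct I i) hi.1 t htT (fun htU => hi.2 ?_) rfl hta.symm
    exact hta ▸ mem_image_of_mem a htU
  · rintro h s - hsS t htT htU i rfl hit
    obtain ⟨u, huU, hua⟩ := mem_image.1 ((h i).resolve_left hsS)
    exact htU (ha (hUT huU) htT (hua.trans hit) ▸ huU)

theorem statement7_general {lbar lam mu : V n} {S Sb : Finset ℕ}
    (horb : WOrb n ct lam lbar) (hdom : DominantW n ct lbar)
    (hJ : ∀ i, i ∈ J ↔ inn lbar (alphaR n ct i) = 0)
    (hA : 0 < aval n ct J lbar (mval n J - 1))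
    (hsep : IsSepPair n ct I J lbar lam S Sb) (hmu : WOrb n ct lbar mu) (hreg : RegI n ct I mu) :
    IsSepPair n ct I J lbar mu S Sb := by
  obtain ⟨hS, hSb, hSm, hSbm, hm, hmb, hmax, hzero, hparity⟩ := hsep
  obtain ⟨π, hπ⟩ := exists_perm_abs_eq_of_wIOrb (horb.trans hmu)
  have hinj := (strictAntiOn_aval hJ hdom hA).injOn
  have hvalues (i : Fin n) : |lbar i| ∈ (Icc 1 (mval n J)).image (aval n ct J lbar) :=
    mem_image.2 (exists_aval_eq_abs hJ hdom hA i)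
  have hvalues_lam := (forall_abs_iff_of_wIOrb horb (· ∈ _)).1 hvalues
  have hvalues_mu := (forall_abs_iff_of_wIOrb hmu (· ∈ _)).2 hvalues
  have hcover := (forall_nsl_eq_zero_iff hSbm hinj hvalues_lam).1 hzero
  obtain ⟨hcover_mu, hcard⟩ := cover_and_card_eq_of_card_le hcover π hπ (by
    simpa [nsl_eq_card, IsMaxN] using fun s hs t ht => hmax s hs t ht mu (horb.trans hmu) hreg)
  refine ⟨hS, hSb, hSm, hSbm, hm, hmb, fun s hs t ht nu hnu hnureg => ?_,
    (forall_nsl_eq_zero_iff hSbm hinj hvalues_mu).2 hcover_mu, hparity⟩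
  calc nsl n ct I nu s (aval n ct J lbar t)
      ≤ nsl n ct I lam s (aval n ct J lbar t) :=
        hmax s hs t ht nu ((horb.trans hmu).trans hnu) hnureg
    _ = nsl n ct I mu s (aval n ct J lbar t) := by
        rw [nsl_eq_card, nsl_eq_card]
        exact (hcard s hs _ (mem_image_of_mem _ ht)).symm

end SeparablePairs

/-- Lemma 5.4 / `sslem1`. -/
theorem statement7 (n : ℕ) (ct : CType) (I J : Finset (Fin n)) (lam lbar : V n)
    (hint : IntegralW n ct lam) (hreg : RegI n ct I lam)
    (horb : WOrb n ct lam lbar) (hdom : DominantW n ct lbar)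
    (hJ : ∀ i : Fin n, i ∈ J ↔ inn lbar (alphaR n ct i) = 0)
    (hA : 0 < aval n ct J lbar (mval n J - 1))
    (S Sb : Finset ℕ) (hsep : IsSepPair n ct I J lbar lam S Sb) :
    ∀ mu ∈ IWJset n ct I lbar, IsSepPair n ct I J lbar mu S Sb :=
  fun _ hmu => statement7_general horb hdom hJ hA hsep hmu.1
    (regI_of_forall_inn_alphaR_pos hmu.2.2)

end JantzenBlocks
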